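/- The subgroup Γ of GL(5,ℝ) generated by the eight Minkowski reflections r_t, r_b, r_u, r_ℓ, r_c, r_{i₀}, r_{i₁}, r_{i₂} is infinite. -/

import Mathlib

noncomputable section

open Real

/-- The Minkowski bilinear form of signature (1,4) on `ℝ^5`. -/
def B (x y : Fin 5 → ℝ) : ℝ :=
  -(x 0 * y 0) + x 1 * y 1 + x 2 * y 2 + x 3 * y 3 + x 4 * y 4

/-- The Kerckhoff–Storm vector `t`. -/
def vt : Fin 5 → ℝ := ![Real.sqrt 2, 1, 1, 1, Real.sqrt 7]
/-- The Kerckhoff–Storm vector `b`. -/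
def vb : Fin 5 → ℝ := ![Real.sqrt 2, 1, 1, -1, -Real.sqrt 7]
/-- The Kerckhoff–Storm vector `u`. -/
def vu : Fin 5 → ℝ := ![Real.sqrt 2, 1, 1, 1, -(Real.sqrt 7 / 7)]
/-- The Kerckhoff–Storm vector `ℓ`. -/
def vl : Fin 5 → ℝ := ![Real.sqrt 2, 1, 1, -1, Real.sqrt 7 / 7]
/-- The Kerckhoff–Storm vector `c`. -/
def vc : Fin 5 → ℝ := ![1, Real.sqrt 2, 0, 0, 0]
/-- The Kerckhoff–Storm vector `i₀`. -/
def vi0 : Fin 5 → ℝ := ![0, -1, 1, 0, 0]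
/-- The Kerckhoff–Storm vector `i₁`. -/
def vi1 : Fin 5 → ℝ := ![0, 0, -1, -1, 0]
/-- The Kerckhoff–Storm vector `i₂`. -/
def vi2 : Fin 5 → ℝ := ![0, 0, -1, 1, 0]

/-- The Minkowski reflection along a vector `v` with `B v v ≠ 0`. -/
def mrefl (v : Fin 5 → ℝ) (x : Fin 5 → ℝ) : Fin 5 → ℝ :=
  x - (2 * (B x v / B v v)) • v

/-!
The Kerckhoff–Storm vectors `t` and `b` satisfy `B t t = B b b = 8 = -B t b`, so the Gram
determinant of this pair vanishes although `t` and `b` are linearly independent: the mirrors of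
`r_t` and `r_b` are parallel, meeting only at a point at infinity. The product of reflections in two
parallel mirrors is a parabolic translation, and since `(r_t r_b)ⁿ b = b - 2n (t + b)` it has
infinite order.
-/

open Module LinearMap

section ParallelReflections

variable {R M : Type*} [CommRing R] [AddCommGroup M] [IsAddTorsionFree M] [Module R M]

theorem not_isOfFinOrder_reflection_mul_reflection {x y : M} {f g : Dual R M}
    (hfx : f x = 2) (hgy : g y = 2) (hfg : f y * g x = 4) (hne : f y • x ≠ (2 : R) • y) :
    ¬ IsOfFinOrder (reflection hfx * reflection hgy) := by
  intro hfin
  have horbit := (infinite_range_reflection_reflection_iterate_iff hfx hgy hfg).mpr hne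
  refine horbit (((finite_powers.mpr hfin).image fun e ↦ e y).subset ?_)
  rintro _ ⟨n, rfl⟩
  exact ⟨_, ⟨n, rfl⟩, LinearEquiv.pow_apply _ n y⟩

theorem not_isOfFinOrder_reflection_mul_reflection_of_gram_eq [NeZero (2 : R)]
    {b : LinearMap.BilinForm R M} {v w : M} (hv : IsReflective b v) (hw : IsReflective b w)
    (hgram : b v w * b w v = b v v * b w w) (hvw : LinearIndependent R ![v, w]) :
    ¬ IsOfFinOrder (reflection (IsReflective.coroot_apply_self b hv) *
      reflection (IsReflective.coroot_apply_self b hw)) := by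
  refine not_isOfFinOrder_reflection_mul_reflection _ _ ?_ fun h ↦ ?_
  · apply (hv.regular.mul hw.regular).left
    calc b v v * b w w * (hv.coroot b w * hw.coroot b v)
        = (b v v * hv.coroot b w) * (b w w * hw.coroot b v) := by ring
      _ = 4 * (b v w * b w v) := by simp only [IsReflective.apply_self_mul_coroot_apply]; ring
      _ = b v v * b w w * 4 := by rw [hgram, mul_comm]
  · have hzero : hv.coroot b w • v + (-2 : R) • w = 0 := by rw [h, neg_smul, add_neg_cancel]
    exact two_ne_zero (neg_eq_zero.mp (LinearIndependent.pair_iff.mp hvw _ _ hzero).2)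

end ParallelReflections

theorem isReflective_of_apply_self_ne_zero {K V : Type*} [Field K] [AddCommGroup V] [Module K V]
    {b : LinearMap.BilinForm K V} {v : V} (hv : b v v ≠ 0) : IsReflective b v where
  regular := .of_ne_zero hv
  dvd_two_mul _ := hv.isUnit.dvd

/-- The form `B` bundled as a bilinear form, to which Mathlib's theory of reflections applies. -/
def minkowskiForm : LinearMap.BilinForm ℝ (Fin 5 → ℝ) :=
  LinearMap.mk₂ ℝ B
    (fun x y z ↦ by simp only [B, Pi.add_apply]; ring)
    (fun c x y ↦ by simp only [B, Pi.smul_apply, smul_eq_mul]; ring)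
    (fun x y z ↦ by simp only [B, Pi.add_apply]; ring)
    (fun c x y ↦ by simp only [B, Pi.smul_apply, smul_eq_mul]; ring)

theorem minkowskiForm_apply (x y : Fin 5 → ℝ) : minkowskiForm x y = B x y := rfl

theorem B_comm (x y : Fin 5 → ℝ) : B x y = B y x := by
  simp only [B]; ring

theorem reflection_minkowskiForm_apply {v : Fin 5 → ℝ} (hv : IsReflective minkowskiForm v)
    (x : Fin 5 → ℝ) :
    reflection (IsReflective.coroot_apply_self minkowskiForm hv) x = mrefl v x := by
  have hB : B v v ≠ 0 := hv.regular.ne_zero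
  have hcoroot : hv.coroot minkowskiForm x = 2 * (B x v / B v v) := by
    rw [← mul_div_assoc, eq_div_iff hB, mul_comm, B_comm x v]
    exact hv.apply_self_mul_coroot_apply minkowskiForm
  rw [reflection_apply, mrefl, hcoroot]

theorem not_isOfFinOrder_mul_of_mrefl {v w : Fin 5 → ℝ} (hv : B v v ≠ 0) (hw : B w w ≠ 0)
    (hgram : B v w ^ 2 = B v v * B w w) (hvw : LinearIndependent ℝ ![v, w])
    {g h : ((Fin 5 → ℝ) →ₗ[ℝ] (Fin 5 → ℝ))ˣ}
    (hg : ∀ x, g.val x = mrefl v x) (hh : ∀ x, h.val x = mrefl w x) :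
    ¬ IsOfFinOrder (g * h) := by
  intro hfin
  have hv' : IsReflective minkowskiForm v := isReflective_of_apply_self_ne_zero hv
  have hw' : IsReflective minkowskiForm w := isReflective_of_apply_self_ne_zero hw
  have hgram' : minkowskiForm v w * minkowskiForm w v
      = minkowskiForm v v * minkowskiForm w w := by
    simpa only [minkowskiForm_apply, B_comm w v, ← sq] using hgram
  have hprod : GeneralLinearGroup.generalLinearEquiv ℝ (Fin 5 → ℝ) (g * h) =
      reflection (IsReflective.coroot_apply_self minkowskiForm hv') *
        reflection (IsReflective.coroot_apply_self minkowskiForm hw') := by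
    ext1 x
    simp [reflection_minkowskiForm_apply, hg, hh]
  apply not_isOfFinOrder_reflection_mul_reflection_of_gram_eq hv' hw' hgram' hvw
  rw [← hprod]
  exact (GeneralLinearGroup.generalLinearEquiv ℝ (Fin 5 → ℝ)).toMonoidHom.isOfFinOrder hfin

theorem B_vt_vt : B vt vt = 8 := by
  simp only [B, vt, Matrix.cons_val]; norm_num

theorem B_vb_vb : B vb vb = 8 := by
  simp only [B, vb, Matrix.cons_val]; norm_num

theorem B_vt_vb : B vt vb = -8 := by
  simp only [B, vt, vb, Matrix.cons_val]; norm_num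

theorem linearIndependent_vt_vb : LinearIndependent ℝ ![vt, vb] := by
  refine LinearIndependent.pair_iff.mpr fun s t hst ↦ ?_
  have hsum : s + t = 0 := by simpa [vt, vb] using congrFun hst 1
  have hdiff : s - t = 0 := by simpa [vt, vb, sub_eq_add_neg] using congrFun hst 3
  constructor <;> linarith

theorem reflection_group_Gamma_infinite_general {gt gb : ((Fin 5 → ℝ) →ₗ[ℝ] (Fin 5 → ℝ))ˣ}
    (ht : ∀ x, gt.val x = mrefl vt x) (hb : ∀ x, gb.val x = mrefl vb x) :
    Infinite (Subgroup.closure {gt, gb}) := by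
  have horder : ¬ IsOfFinOrder (gt * gb) :=
    not_isOfFinOrder_mul_of_mrefl (by norm_num [B_vt_vt]) (by norm_num [B_vb_vb])
      (by norm_num [B_vt_vt, B_vb_vb, B_vt_vb]) linearIndependent_vt_vb ht hb
  have hmem : gt * gb ∈ Subgroup.closure {gt, gb} :=
    mul_mem (Subgroup.subset_closure (by simp)) (Subgroup.subset_closure (by simp))
  have hle : Submonoid.powers (gt * gb) ≤ (Subgroup.closure {gt, gb}).toSubmonoid :=
    Submonoid.powers_le.mpr hmem
  exact ((infinite_powers.mpr horder).mono hle).to_subtype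

/-- The subgroup of `GL(5,ℝ)` generated by the eight Minkowski reflections
`r_t, r_b, r_u, r_ℓ, r_c, r_{i₀}, r_{i₁}, r_{i₂}` is infinite. -/
theorem reflection_group_Gamma_infinite
    (gt gb gu gl gc g₀ g₁ g₂ : ((Fin 5 → ℝ) →ₗ[ℝ] (Fin 5 → ℝ))ˣ)
    (ht : ∀ x, gt.val x = mrefl vt x)
    (hb : ∀ x, gb.val x = mrefl vb x)
    (hu : ∀ x, gu.val x = mrefl vu x)
    (hl : ∀ x, gl.val x = mrefl vl x)
    (hc : ∀ x, gc.val x = mrefl vc x)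
    (h₀ : ∀ x, g₀.val x = mrefl vi0 x)
    (h₁ : ∀ x, g₁.val x = mrefl vi1 x)
    (h₂ : ∀ x, g₂.val x = mrefl vi2 x) :
    Infinite (Subgroup.closure {gt, gb, gu, gl, gc, g₀, g₁, g₂} :
      Subgroup ((Fin 5 → ℝ) →ₗ[ℝ] (Fin 5 → ℝ))ˣ) := by
  have hsub : ({gt, gb} : Set _) ⊆ {gt, gb, gu, gl, gc, g₀, g₁, g₂} := by grind
  exact ((Set.infinite_coe_iff.mp (reflection_group_Gamma_infinite_general ht hb)).mono
    (Subgroup.closure_mono hsub)).to_subtype
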